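/- arXiv:2002.12518 — 2 statements merged into one kernel-verified Lean document; each statement's English description precedes it below -/
import Mathlib

section
/- Let I, d, K, J be positive integers, let X ⊆ {0,1}^I × ℝ^d be nonempty, let g : {0,1}^I × ℝ^d → ℝ, and let Q : {0,1}^I × {1,…,K} → ℝ. Let ξ¹,…,ξ^K ∈ ℝ^J, γ, η ∈ ℝ, and let μ : {0,1}^I → ℝ^J and S : {0,1}^I → ℝ^{J×J} be such that S(x) is symmetric positive definite for every x; for x ∈ {0,1}^I set P₃(x) = {p ∈ ℝ^K : p ≥ 0, Σ_k p_k = 1, (Σ_k p_k ξᵏ − μ(x))ᵀ S(x)⁻¹ (Σ_k p_k ξᵏ − μ(x)) ≤ γ, and η S(x) − Σ_k p_k (ξᵏ − μ(x))(ξᵏ − μ(x))ᵀ is positive semidefinite}. Assume the Slater condition: for every x in the projection X̂ = {x : ∃ y, (x,y) ∈ X} there exists p ∈ ℝ^K with p ≥ 0, Σ_k p_k = 1, (Σ_k p_k ξᵏ − μ(x))ᵀ S(x)⁻¹ (Σ_k p_k ξᵏ − μ(x)) < γ, and η S(x) − Σ_k p_k (ξᵏ − μ(x))(ξᵏ − μ(x))ᵀ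 positive definite. Then inf over (x,y) ∈ X of [ g(x,y) + sup_{p ∈ P₃(x)} Σ_{k=1}^K p_k Q(x,k) ] equals inf of g(x,y) + s + S(x) • z₁ − 2 μ(x)ᵀ z₂ + γ z₃ + η (S(x) • Y) over all (x,y) ∈ X, s ∈ ℝ, z₁ ∈ ℝ^{J×J}, z₂ ∈ ℝ^J, z₃ ∈ ℝ, Y ∈ ℝ^{J×J}, subject to: the (J+1)×(J+1) block matrix Z = [[z₁, z₂],[z₂ᵀ, z₃]] is positive semidefinite, Y is positive semidefinite, and s − 2 z₂ᵀ ξᵏ + ((ξᵏ − μ(x))(ξᵏ − μ(x))ᵀ) • Y ≥ Q(x,k) for every k ∈ {1,…,K}. -/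
open scoped BigOperators
open Matrix

/-- Frobenius inner product `A • B = trace(Aᵀ B) = Σᵢⱼ Aᵢⱼ Bᵢⱼ`. -/
def frob {n : Type*} [Fintype n] (A B : Matrix n n ℝ) : ℝ := ∑ i, ∑ j, A i j * B i j

/-- The block matrix `Z = [[z₁, z₂], [z₂ᵀ, z₃]]`. -/
def blockMat {J : ℕ} (z₁ : Matrix (Fin J) (Fin J) ℝ) (z₂ : Fin J → ℝ) (z₃ : ℝ) :
    Matrix (Fin J ⊕ Unit) (Fin J ⊕ Unit) ℝ :=
  Matrix.fromBlocks z₁ (Matrix.of fun i _ => z₂ i) (Matrix.of fun _ j => z₂ j)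
    (Matrix.of fun _ _ => z₃)

/-- Type 3 (general moment-based) ambiguity set with finite support
`ξ¹,…,ξ^K ∈ ℝ^J`, estimated mean `μ`, positive definite matrix `S`, scalars `γ, η`. -/
def Type3Set (K J : ℕ) (ξ : Fin K → Fin J → ℝ) (μ : Fin J → ℝ)
    (S : Matrix (Fin J) (Fin J) ℝ) (γ η : ℝ) : Set (Fin K → ℝ) :=
  {p | (∀ k, 0 ≤ p k) ∧ (∑ k, p k) = 1 ∧
    (fun j => (∑ k, p k * ξ k j) - μ j) ⬝ᵥ (S⁻¹ *ᵥ fun j => (∑ k, p k * ξ k j) - μ j) ≤ γ ∧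
    (η • S -
      ∑ k, p k • Matrix.vecMulVec (fun j => ξ k j - μ j) (fun j => ξ k j - μ j)).PosSemidef}

open scoped MatrixOrder Matrix.Norms.L2Operator in
lemma frob_nonneg' {n : Type*} [Fintype n] {A B : Matrix n n ℝ}
    (hA : A.PosSemidef) (hB : B.PosSemidef) : 0 ≤ frob A B := by
  classical
  obtain ⟨C, rfl⟩ := CStarAlgebra.nonneg_iff_eq_star_mul_self.mp hB.nonneg
  rw [Matrix.star_eq_conjTranspose]
  have h : frob A (Cᴴ * C) = ∑ k, (C k) ⬝ᵥ (A *ᵥ (C k)) := by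
    simp only [frob, dotProduct, mulVec, Matrix.mul_apply, Matrix.conjTranspose_apply, star_trivial,
      Finset.mul_sum]
    rw [Finset.sum_comm' (t' := Finset.univ) (s' := fun _ => Finset.univ) (by simp)]
    rw [Finset.sum_congr rfl (fun j _ => Finset.sum_comm)]
    rw [Finset.sum_comm]
    refine Finset.sum_congr rfl fun k _ => ?_
    rw [Finset.sum_comm]
    refine Finset.sum_congr rfl fun i _ => Finset.sum_congr rfl fun j _ => ?_
    ring
  rw [h]
  refine Finset.sum_nonneg fun k _ => ?_
  simpa using hA.dotProduct_mulVec_nonneg (C k)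

lemma frob_add_left' {n : Type*} [Fintype n] (A B C : Matrix n n ℝ) :
    frob (A + B) C = frob A C + frob B C := by
  simp [frob, add_mul, Finset.sum_add_distrib]

lemma frob_sub_left' {n : Type*} [Fintype n] (A B C : Matrix n n ℝ) :
    frob (A - B) C = frob A C - frob B C := by
  simp [frob, sub_mul, Finset.sum_sub_distrib]

lemma frob_smul_left' {n : Type*} [Fintype n] (c : ℝ) (A C : Matrix n n ℝ) :
    frob (c • A) C = c * frob A C := by
  simp [frob, Finset.mul_sum, mul_assoc]

lemma frob_sum_left' {n ι : Type*} [Fintype n] (s : Finset ι) (A : ι → Matrix n n ℝ)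
    (C : Matrix n n ℝ) : frob (∑ k ∈ s, A k) C = ∑ k ∈ s, frob (A k) C := by
  classical
  induction s using Finset.induction_on with
  | empty => simp [frob]
  | insert a s ha ih => rw [Finset.sum_insert ha, Finset.sum_insert ha, frob_add_left', ih]

lemma repr_psd {n : Type*} [Fintype n] (φ : Matrix n n ℝ →ₗ[ℝ] ℝ)
    (hφ : ∀ H : Matrix n n ℝ, H.PosSemidef → 0 ≤ φ H) :
    ∃ Z : Matrix n n ℝ, Z.PosSemidef ∧ ∀ H : Matrix n n ℝ, H.IsHermitian → φ H = frob H Z := by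
  classical
  let W : Matrix n n ℝ := fun i j => φ (Matrix.single i j 1)
  have hW : ∀ H : Matrix n n ℝ, φ H = frob H W := by
    intro H
    conv_lhs => rw [Matrix.matrix_eq_sum_single H]
    simp only [map_sum, frob, W]
    refine Finset.sum_congr rfl fun i _ => Finset.sum_congr rfl fun j _ => ?_
    rw [← smul_eq_mul, ← map_smul, Matrix.smul_single]
    simp
  let Z : Matrix n n ℝ := fun i j => (W i j + W j i) / 2
  have hZ : ∀ H : Matrix n n ℝ, H.IsHermitian → φ H = frob H Z := by
    intro H hH
    have h1 : frob H W = ∑ i, ∑ j, H i j * W j i := by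
      rw [frob, Finset.sum_comm]
      refine Finset.sum_congr rfl fun i _ => Finset.sum_congr rfl fun j _ => ?_
      have := hH.apply i j
      simp only [star_trivial] at this
      rw [this]
    have h2 : frob H Z = (frob H W + ∑ i, ∑ j, H i j * W j i) / 2 := by
      simp only [frob, Z, ← Finset.sum_add_distrib, Finset.sum_div]
      refine Finset.sum_congr rfl fun i _ => Finset.sum_congr rfl fun j _ => ?_
      ring
    rw [h2, ← h1, hW]; ring
  refine ⟨Z, ?_, hZ⟩
  refine Matrix.PosSemidef.of_dotProduct_mulVec_nonneg ?_ ?_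
  · ext i j
    rw [Matrix.conjTranspose_apply]
    simp [Z, add_comm]
  · intro x
    have h := Matrix.posSemidef_vecMulVec_self_star x
    have h1 := hφ _ h
    rw [hZ _ h.1] at h1
    refine h1.trans_eq ?_
    simp only [frob, dotProduct, mulVec, vecMulVec_apply, Pi.star_apply, star_trivial,
      Finset.mul_sum]
    refine Finset.sum_congr rfl fun i _ => Finset.sum_congr rfl fun j _ => ?_
    ring

lemma isClosed_psd' {n : Type*} [Fintype n] : IsClosed {H : Matrix n n ℝ | H.PosSemidef} := by
  have : {H : Matrix n n ℝ | H.PosSemidef} =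
      {H | Hᴴ = H} ∩ ⋂ x : n → ℝ, {H | 0 ≤ star x ⬝ᵥ (H *ᵥ x)} := by
    ext H
    simp only [Set.mem_ofPred_eq, Matrix.posSemidef_iff_dotProduct_mulVec, Set.mem_inter_iff,
      Set.mem_iInter]
    rfl
  rw [this]
  refine IsClosed.inter (isClosed_eq (by fun_prop) (by fun_prop)) ?_
  exact isClosed_iInter fun x => isClosed_le continuous_const (by fun_prop)

lemma conic_dual {ι n m : Type*} [Fintype ι] [Fintype n] [Fintype m] (Q : ι → ℝ)
    (G : ι → Matrix n n ℝ) (H : ι → Matrix m m ℝ)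
    (hG : ∀ k, (G k).IsHermitian) (hH : ∀ k, (H k).IsHermitian) (v c : ℝ) (hvc : v < c)
    (hne : ∃ p ∈ stdSimplex ℝ ι, (∑ k, p k • G k).PosSemidef ∧ (∑ k, p k • H k).PosSemidef)
    (hub : ∀ p ∈ stdSimplex ℝ ι, (∑ k, p k • G k).PosSemidef → (∑ k, p k • H k).PosSemidef →
      ∑ k, p k * Q k ≤ v) :
    ∃ (Z : Matrix n n ℝ) (Y : Matrix m m ℝ), Z.PosSemidef ∧ Y.PosSemidef ∧
      ∀ k, Q k + frob (G k) Z + frob (H k) Y ≤ c := by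
  classical
  let i1 : LocallyConvexSpace ℝ (Matrix n n ℝ) :=
    inferInstanceAs (LocallyConvexSpace ℝ (n → n → ℝ))
  let i2 : LocallyConvexSpace ℝ (Matrix m m ℝ) :=
    inferInstanceAs (LocallyConvexSpace ℝ (m → m → ℝ))
  let a : ι → ℝ × Matrix n n ℝ × Matrix m m ℝ := fun k => (Q k, G k, H k)
  let L := Fintype.linearCombination ℝ a
  have hL : ∀ p, L p = (∑ k, p k * Q k, ∑ k, p k • G k, ∑ k, p k • H k) := by
    intro p
    simp only [L, Fintype.linearCombination_apply, a]
    ext1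
    · simp [Prod.fst_sum]
    · ext1 <;> simp [Prod.fst_sum, Prod.snd_sum]
  have hLc : Continuous L := LinearMap.continuous_on_pi _
  let B : Set (ℝ × Matrix n n ℝ × Matrix m m ℝ) :=
    {b | c ≤ b.1 ∧ b.2.1.PosSemidef ∧ b.2.2.PosSemidef}
  have hBconv : Convex ℝ B := by
    rintro ⟨x1, x2, x3⟩ ⟨hx1, hx2, hx3⟩ ⟨y1, y2, y3⟩ ⟨hy1, hy2, hy3⟩ s t hs ht hst
    refine ⟨?_, (hx2.smul hs).add (hy2.smul ht), (hx3.smul hs).add (hy3.smul ht)⟩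
    simp only [Prod.fst_add, Prod.smul_fst, smul_eq_mul] at *
    have e : c = s * c + t * c := by rw [← add_mul, hst, one_mul]
    have e1 := mul_le_mul_of_nonneg_left hx1 hs
    have e2 := mul_le_mul_of_nonneg_left hy1 ht
    linarith
  have hBcl : IsClosed B := by
    refine (isClosed_le continuous_const continuous_fst).inter ?_
    exact (isClosed_psd'.preimage (continuous_fst.comp continuous_snd)).inter
      (isClosed_psd'.preimage (continuous_snd.comp continuous_snd))
  obtain ⟨f, u, w, hf1, huw, hf2⟩ := geometric_hahn_banach_compact_closed
    ((convex_stdSimplex ℝ ι).linear_image L) ((isCompact_stdSimplex ℝ ι).image hLc) hBconv hBcl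
    (by
      rw [Set.disjoint_left]
      rintro _ ⟨p, hp, rfl⟩ ⟨h1, h2, h3⟩
      rw [hL] at h1 h2 h3
      have := hub p hp h2 h3
      simp only at h1
      linarith)
  have hsplit : ∀ r A D, f (r, A, D) = r * f (1, 0, 0) + f (0, A, 0) + f (0, 0, D) := by
    intro r A D
    rw [← smul_eq_mul, ← map_smul, ← map_add, ← map_add]
    simp
  -- nonnegativity along recession directions
  have key : ∀ e : ℝ × Matrix n n ℝ × Matrix m m ℝ, 0 ≤ e.1 → e.2.1.PosSemidef →
      e.2.2.PosSemidef → 0 ≤ f e := by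
    intro e h1 h2 h3
    by_contra hneg
    push Not at hneg
    have hB : ∀ t : ℝ, 0 ≤ t → w < f (c, 0, 0) + t * f e := by
      intro t ht
      have : ((c, 0, 0) + t • e : ℝ × Matrix n n ℝ × Matrix m m ℝ) ∈ B := by
        refine ⟨?_, ?_, ?_⟩
        · simp; positivity
        · simpa using h2.smul ht
        · simpa using h3.smul ht
      have := hf2 _ this
      simpa using this
    have h0 := hB 0 le_rfl
    have h4 := hB ((f (c, 0, 0) - w) / (-f e)) (div_nonneg (by linarith) (by linarith))
    have h5 : (f (c, 0, 0) - w) / (-f e) * f e = -(f (c, 0, 0) - w) := by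
      have : f e ≠ 0 := hneg.ne
      field_simp
    linarith
  have hc : w < f (c, 0, 0) := hf2 _ ⟨le_rfl, .zero, .zero⟩
  have hlam : 0 < f (1, 0, 0) := by
    have h0 : 0 ≤ f (1, 0, 0) := key _ (by simp) .zero .zero
    rcases h0.lt_or_eq with h | h
    · exact h
    exfalso
    obtain ⟨p, hp, hp1, hp2⟩ := hne
    have h1 := hf1 _ ⟨p, hp, rfl⟩
    rw [hL, hsplit, ← h] at h1
    have h2 := key (0, ∑ k, p k • G k, 0) le_rfl hp1 .zero
    have h3 := key (0, 0, ∑ k, p k • H k) le_rfl .zero hp2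
    have h4 := hsplit c 0 0
    have h5 : f (0, 0, 0) = 0 := map_zero f
    rw [← h, h5] at h4
    linarith
  set lam := f (1, 0, 0) with hlamdef
  let φ : Matrix n n ℝ →ₗ[ℝ] ℝ :=
    lam⁻¹ • (f.toLinearMap ∘ₗ LinearMap.inr ℝ ℝ _ ∘ₗ LinearMap.inl ℝ _ _)
  let ψ : Matrix m m ℝ →ₗ[ℝ] ℝ :=
    lam⁻¹ • (f.toLinearMap ∘ₗ LinearMap.inr ℝ ℝ _ ∘ₗ LinearMap.inr ℝ _ _)
  have hφ : ∀ A, φ A = lam⁻¹ * f (0, A, 0) := fun A => by simp [φ]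
  have hψ : ∀ A, ψ A = lam⁻¹ * f (0, 0, A) := fun A => by simp [ψ]
  obtain ⟨Z, hZ, hZ'⟩ := repr_psd φ (fun A hA => by
    rw [hφ]; exact mul_nonneg (by positivity) (key _ le_rfl hA .zero))
  obtain ⟨Y, hY, hY'⟩ := repr_psd ψ (fun A hA => by
    rw [hψ]; exact mul_nonneg (by positivity) (key _ le_rfl .zero hA))
  refine ⟨Z, Y, hZ, hY, fun k => ?_⟩
  rw [← hZ' _ (hG k), ← hY' _ (hH k), hφ, hψ]
  have h1 := hf1 _ ⟨Pi.single k 1, single_mem_stdSimplex ℝ k, rfl⟩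
  have h2 : L (Pi.single k 1) = (Q k, G k, H k) := by
    simp [L, a]
  rw [h2, hsplit] at h1
  have h4 := hsplit c 0 0
  have h5 : f (0, 0, 0) = 0 := map_zero f
  rw [h5] at h4
  have h6 : Q k * lam + f (0, G k, 0) + f (0, 0, H k) ≤ c * lam := by linarith
  have h7 : Q k + lam⁻¹ * f (0, G k, 0) + lam⁻¹ * f (0, 0, H k) =
      lam⁻¹ * (Q k * lam + f (0, G k, 0) + f (0, 0, H k)) := by
    field_simp
  rw [h7, inv_mul_le_iff₀ hlam]
  linarith

lemma frob_block {J : ℕ} (A z₁ : Matrix (Fin J) (Fin J) ℝ) (b z₂ : Fin J → ℝ) (c z₃ : ℝ) :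
    frob (blockMat A b c) (blockMat z₁ z₂ z₃) = frob A z₁ + 2 * (∑ j, b j * z₂ j) + c * z₃ := by
  simp [frob, blockMat, Fintype.sum_sum_type, Finset.sum_add_distrib]
  ring

lemma block_psd_iff {J : ℕ} {S : Matrix (Fin J) (Fin J) ℝ} (hS : S.PosDef) (b : Fin J → ℝ)
    (c : ℝ) : (blockMat S b c).PosSemidef ↔ b ⬝ᵥ (S⁻¹ *ᵥ b) ≤ c := by
  classical
  have : Invertible S := hS.isUnit.invertible
  have h := Matrix.PosDef.fromBlocks₁₁ (A := S) (Matrix.of fun (i : Fin J) (_ : Unit) => b i)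
    (Matrix.of fun (_ _ : Unit) => c) hS
  have e : (Matrix.of fun (i : Fin J) (_ : Unit) => b i)ᴴ = Matrix.of fun (_ : Unit) j => b j := by
    ext; simp
  rw [e] at h
  rw [blockMat, h]
  have e2 : (Matrix.of fun (_ _ : Unit) => c) - (Matrix.of fun (_ : Unit) j => b j) * S⁻¹ *
      (Matrix.of fun (i : Fin J) (_ : Unit) => b i) =
      Matrix.diagonal fun _ => c - b ⬝ᵥ (S⁻¹ *ᵥ b) := by
    ext i j
    rw [Matrix.mul_assoc]
    simp [Matrix.mul_apply, dotProduct, mulVec, Subsingleton.elim i j]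
  rw [e2, Matrix.posSemidef_diagonal_iff]
  simp

lemma mem_type3_iff {K J : ℕ} (ξ : Fin K → Fin J → ℝ) (μ : Fin J → ℝ)
    {S : Matrix (Fin J) (Fin J) ℝ} (hS : S.PosDef) (γ η : ℝ) (p : Fin K → ℝ) :
    p ∈ Type3Set K J ξ μ S γ η ↔ p ∈ stdSimplex ℝ (Fin K) ∧
      (∑ k, p k • blockMat S (fun j => ξ k j - μ j) γ).PosSemidef ∧
      (∑ k, p k • (η • S -
        Matrix.vecMulVec (fun j => ξ k j - μ j) (fun j => ξ k j - μ j))).PosSemidef := by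
  rw [Type3Set, Set.mem_ofPred_eq]
  have hrw : (∀ k, 0 ≤ p k) ∧ ∑ k, p k = 1 → 
      (∑ k, p k • blockMat S (fun j => ξ k j - μ j) γ =
        blockMat S (fun j => (∑ k, p k * ξ k j) - μ j) γ) ∧
      (∑ k, p k • (η • S - Matrix.vecMulVec (fun j => ξ k j - μ j) (fun j => ξ k j - μ j)) =
        η • S - ∑ k, p k • Matrix.vecMulVec (fun j => ξ k j - μ j) (fun j => ξ k j - μ j)) := by
    rintro ⟨-, h1⟩
    have hlin : ∀ j, ∑ k, p k * (ξ k j - μ j) = (∑ k, p k * ξ k j) - μ j := by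
      intro j
      simp only [mul_sub, Finset.sum_sub_distrib, ← Finset.sum_mul, h1, one_mul]
    constructor
    · ext i j
      rw [Matrix.sum_apply]
      rcases i with i | i <;> rcases j with j | j <;>
        simp [blockMat, ← Finset.sum_mul, h1, hlin]
    · simp only [smul_sub, Finset.sum_sub_distrib, ← Finset.sum_smul, h1, one_smul]
  constructor
  · rintro ⟨h0, h1, h2, h3⟩
    obtain ⟨e1, e2⟩ := hrw ⟨h0, h1⟩
    rw [e1, e2]
    exact ⟨⟨h0, h1⟩, (block_psd_iff hS _ _).2 h2, h3⟩
  · rintro ⟨⟨h0, h1⟩, h2, h3⟩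
    obtain ⟨e1, e2⟩ := hrw ⟨h0, h1⟩
    rw [e1] at h2
    rw [e2] at h3
    exact ⟨h0, h1, (block_psd_iff hS _ _).1 h2, h3⟩

lemma weak_dual {K J : ℕ} (ξ : Fin K → Fin J → ℝ) (μ : Fin J → ℝ)
    {S : Matrix (Fin J) (Fin J) ℝ} (hS : S.PosDef) (γ η : ℝ) (Q : Fin K → ℝ)
    (s z₃ : ℝ) (z₁ Y : Matrix (Fin J) (Fin J) ℝ) (z₂ : Fin J → ℝ)
    (hZ : (blockMat z₁ z₂ z₃).PosSemidef) (hY : Y.PosSemidef)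
    (hk : ∀ k, Q k ≤ s - 2 * (∑ j, z₂ j * ξ k j) +
          frob (Matrix.vecMulVec (fun j => ξ k j - μ j) (fun j => ξ k j - μ j)) Y)
    (p : Fin K → ℝ) (hp : p ∈ Type3Set K J ξ μ S γ η) :
    ∑ k, p k * Q k ≤ s + frob S z₁ - 2 * (∑ j, μ j * z₂ j) + γ * z₃ + η * frob S Y := by
  obtain ⟨⟨h0, h1⟩, h2, h3⟩ := (mem_type3_iff ξ μ hS γ η p).1 hp
  have h4 := frob_nonneg' h2 hZ
  have h5 := frob_nonneg' h3 hY
  have h6 : ∑ k, p k * Q k + frob (∑ k, p k • blockMat S (fun j => ξ k j - μ j) γ)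
        (blockMat z₁ z₂ z₃) + frob (∑ k, p k • (η • S -
        Matrix.vecMulVec (fun j => ξ k j - μ j) (fun j => ξ k j - μ j))) Y ≤
      ∑ k, p k * (s + frob S z₁ - 2 * (∑ j, μ j * z₂ j) + γ * z₃ + η * frob S Y) := by
    rw [frob_sum_left', frob_sum_left', ← Finset.sum_add_distrib, ← Finset.sum_add_distrib]
    refine Finset.sum_le_sum fun k _ => ?_
    rw [frob_smul_left', frob_smul_left', frob_block, frob_sub_left', frob_smul_left', ← mul_add,
      ← mul_add]
    refine mul_le_mul_of_nonneg_left ?_ (h0 k)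
    have := hk k
    have e : ∑ j, (ξ k j - μ j) * z₂ j = ∑ j, z₂ j * ξ k j - ∑ j, μ j * z₂ j := by
      rw [← Finset.sum_sub_distrib]
      exact Finset.sum_congr rfl fun j _ => by ring
    rw [e]
    linarith
  rw [← Finset.sum_mul, h1, one_mul] at h6
  linarith

lemma strong_dual {K J : ℕ} (ξ : Fin K → Fin J → ℝ) (μ : Fin J → ℝ)
    {S : Matrix (Fin J) (Fin J) ℝ} (hS : S.PosDef) (γ η : ℝ) (Q : Fin K → ℝ)
    (hne : (Type3Set K J ξ μ S γ η).Nonempty) (v c : ℝ) (hvc : v < c)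
    (hv : ∀ p ∈ Type3Set K J ξ μ S γ η, ∑ k, p k * Q k ≤ v) :
    ∃ s z₃ : ℝ, ∃ z₁ Y : Matrix (Fin J) (Fin J) ℝ, ∃ z₂ : Fin J → ℝ,
        (blockMat z₁ z₂ z₃).PosSemidef ∧ Y.PosSemidef ∧
        (∀ k, Q k ≤ s - 2 * (∑ j, z₂ j * ξ k j) +
          frob (Matrix.vecMulVec (fun j => ξ k j - μ j) (fun j => ξ k j - μ j)) Y) ∧
        c = s + frob S z₁ - 2 * (∑ j, μ j * z₂ j) + γ * z₃ + η * frob S Y := by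
  have hSs : ∀ i j, S i j = S j i := fun i j => by simpa using (hS.isHermitian.apply i j).symm
  obtain ⟨Z, Y, hZ, hY, h⟩ := conic_dual Q (fun k => blockMat S (fun j => ξ k j - μ j) γ)
    (fun k => η • S - Matrix.vecMulVec (fun j => ξ k j - μ j) (fun j => ξ k j - μ j))
    (fun k => by
      ext i j
      rw [Matrix.conjTranspose_apply]
      rcases i with i | i <;> rcases j with j | j <;> simp [blockMat, hSs])
    (fun k => by
      ext i j
      rw [Matrix.conjTranspose_apply]
      simp [Matrix.vecMulVec_apply, hSs i j, mul_comm])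
    v c hvc
    (by
      obtain ⟨p, hp⟩ := hne
      exact ⟨p, (mem_type3_iff ξ μ hS γ η p).1 hp⟩)
    (fun p hp h1 h2 => hv p ((mem_type3_iff ξ μ hS γ η p).2 ⟨hp, h1, h2⟩))
  let z₁ : Matrix (Fin J) (Fin J) ℝ := fun i j => Z (.inl i) (.inl j)
  let z₂ : Fin J → ℝ := fun i => Z (.inl i) (.inr ())
  let z₃ : ℝ := Z (.inr ()) (.inr ())
  have hZb : Z = blockMat z₁ z₂ z₃ := by
    ext i j
    rcases i with i | i <;> rcases j with j | j
    · rfl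
    · rfl
    · have h1 := hZ.1.apply (.inr i) (.inl j)
      rw [star_trivial] at h1
      exact h1.symm
    · rfl
  rw [hZb] at hZ h
  refine ⟨c - (frob S z₁ - 2 * (∑ j, μ j * z₂ j) + γ * z₃ + η * frob S Y), z₃, z₁, Y, z₂, hZ, hY,
    fun k => ?_, by ring⟩
  have := h k
  rw [frob_block, frob_sub_left', frob_smul_left'] at this
  have e : ∑ j, (ξ k j - μ j) * z₂ j = ∑ j, z₂ j * ξ k j - ∑ j, μ j * z₂ j := by
    rw [← Finset.sum_sub_distrib]
    exact Finset.sum_congr rfl fun j _ => by ring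
  rw [e] at this
  linarith

theorem stmt4 (I d K J : ℕ) (hI : 0 < I) (hd : 0 < d) (hK : 0 < K) (hJ : 0 < J)
    (X : Set ((Fin I → ℝ) × (Fin d → ℝ))) (hXne : X.Nonempty)
    (hXbin : ∀ z ∈ X, ∀ i, z.1 i = 0 ∨ z.1 i = 1)
    (g : (Fin I → ℝ) × (Fin d → ℝ) → ℝ)
    (Q : (Fin I → ℝ) → Fin K → ℝ)
    (ξ : Fin K → Fin J → ℝ) (γ η : ℝ)
    (μ : (Fin I → ℝ) → Fin J → ℝ)
    (S : (Fin I → ℝ) → Matrix (Fin J) (Fin J) ℝ)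
    (hSpd : ∀ x : Fin I → ℝ, (S x).PosDef)
    (hslater : ∀ x : Fin I → ℝ, (∃ y, (x, y) ∈ X) →
      ∃ p : Fin K → ℝ, (∀ k, 0 ≤ p k) ∧ (∑ k, p k) = 1 ∧
        (fun j => (∑ k, p k * ξ k j) - μ x j) ⬝ᵥ
          ((S x)⁻¹ *ᵥ fun j => (∑ k, p k * ξ k j) - μ x j) < γ ∧
        (η • S x -
          ∑ k, p k • Matrix.vecMulVec (fun j => ξ k j - μ x j)
            (fun j => ξ k j - μ x j)).PosDef) :
    sInf {v : ℝ | ∃ z ∈ X,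
        v = g z + sSup {r : ℝ | ∃ p ∈ Type3Set K J ξ (μ z.1) (S z.1) γ η,
          r = ∑ k, p k * Q z.1 k}} =
    sInf {v : ℝ | ∃ z ∈ X, ∃ s z₃ : ℝ, ∃ z₁ Y : Matrix (Fin J) (Fin J) ℝ, ∃ z₂ : Fin J → ℝ,
        (blockMat z₁ z₂ z₃).PosSemidef ∧ Y.PosSemidef ∧
        (∀ k, Q z.1 k ≤ s - 2 * (∑ j, z₂ j * ξ k j) +
          frob (Matrix.vecMulVec (fun j => ξ k j - μ z.1 j) (fun j => ξ k j - μ z.1 j)) Y) ∧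
        v = g z + s + frob (S z.1) z₁ - 2 * (∑ j, μ z.1 j * z₂ j) + γ * z₃
            + η * frob (S z.1) Y} := by
  have hT : ∀ z ∈ X, (Type3Set K J ξ (μ z.1) (S z.1) γ η).Nonempty := by
    intro z hz
    obtain ⟨p, h0, h1, h2, h3⟩ := hslater z.1 ⟨z.2, hz⟩
    exact ⟨p, h0, h1, h2.le, h3.posSemidef⟩
  have hbdd : ∀ z ∈ X, BddAbove {r : ℝ | ∃ p ∈ Type3Set K J ξ (μ z.1) (S z.1) γ η,
          r = ∑ k, p k * Q z.1 k} := by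
    intro z _
    refine ⟨∑ k, |Q z.1 k|, ?_⟩
    rintro _ ⟨p, ⟨h0, h1, -⟩, rfl⟩
    refine Finset.sum_le_sum fun k _ => ?_
    have hp1 : p k ≤ 1 := by
      rw [← h1]
      exact Finset.single_le_sum (fun i _ => h0 i) (Finset.mem_univ k)
    calc p k * Q z.1 k ≤ p k * |Q z.1 k| := mul_le_mul_of_nonneg_left (le_abs_self _) (h0 k)
      _ ≤ 1 * |Q z.1 k| := mul_le_mul_of_nonneg_right hp1 (abs_nonneg _)
      _ = _ := one_mul _
  set A := {v : ℝ | ∃ z ∈ X,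
        v = g z + sSup {r : ℝ | ∃ p ∈ Type3Set K J ξ (μ z.1) (S z.1) γ η,
          r = ∑ k, p k * Q z.1 k}} with hA
  set B := {v : ℝ | ∃ z ∈ X, ∃ s z₃ : ℝ, ∃ z₁ Y : Matrix (Fin J) (Fin J) ℝ, ∃ z₂ : Fin J → ℝ,
        (blockMat z₁ z₂ z₃).PosSemidef ∧ Y.PosSemidef ∧
        (∀ k, Q z.1 k ≤ s - 2 * (∑ j, z₂ j * ξ k j) +
          frob (Matrix.vecMulVec (fun j => ξ k j - μ z.1 j) (fun j => ξ k j - μ z.1 j)) Y) ∧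
        v = g z + s + frob (S z.1) z₁ - 2 * (∑ j, μ z.1 j * z₂ j) + γ * z₃
            + η * frob (S z.1) Y} with hB
  have hBA : ∀ b ∈ B, ∃ a ∈ A, a ≤ b := by
    rintro b ⟨z, hz, s, z₃, z₁, Y, z₂, hZ, hY, hk, rfl⟩
    refine ⟨_, ⟨z, hz, rfl⟩, ?_⟩
    have : sSup {r : ℝ | ∃ p ∈ Type3Set K J ξ (μ z.1) (S z.1) γ η,
          r = ∑ k, p k * Q z.1 k} ≤ s + frob (S z.1) z₁ - 2 * (∑ j, μ z.1 j * z₂ j) + γ * z₃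
            + η * frob (S z.1) Y := by
      obtain ⟨p, hp⟩ := hT z hz
      refine csSup_le ⟨_, p, hp, rfl⟩ ?_
      rintro _ ⟨p, hp, rfl⟩
      exact weak_dual ξ (μ z.1) (hSpd z.1) γ η (Q z.1) s z₃ z₁ Y z₂ hZ hY hk p hp
    linarith
  have hAB : ∀ a ∈ A, ∀ ε > 0, a + ε ∈ B := by
    rintro a ⟨z, hz, rfl⟩ ε hε
    obtain ⟨s, z₃, z₁, Y, z₂, hZ, hY, hk, hc⟩ := strong_dual ξ (μ z.1) (hSpd z.1) γ η (Q z.1)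
      (hT z hz) (sSup {r : ℝ | ∃ p ∈ Type3Set K J ξ (μ z.1) (S z.1) γ η,
          r = ∑ k, p k * Q z.1 k}) _ (lt_add_of_pos_right _ hε)
      (fun p hp => le_csSup (hbdd z hz) ⟨p, hp, rfl⟩)
    refine ⟨z, hz, s, z₃, z₁, Y, z₂, hZ, hY, hk, ?_⟩
    rw [add_assoc, hc]
    ring
  have hAne : A.Nonempty := by
    obtain ⟨z, hz⟩ := hXne
    exact ⟨_, z, hz, rfl⟩
  have hBne : B.Nonempty := by
    obtain ⟨a, ha⟩ := hAne
    exact ⟨_, hAB a ha 1 one_pos⟩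
  by_cases hbA : BddBelow A
  · have hbB : BddBelow B := by
      obtain ⟨m, hm⟩ := hbA
      refine ⟨m, fun b hb => ?_⟩
      obtain ⟨a, ha, hab⟩ := hBA b hb
      exact (hm ha).trans hab
    apply le_antisymm
    · refine le_csInf hBne fun b hb => ?_
      obtain ⟨a, ha, hab⟩ := hBA b hb
      exact (csInf_le hbA ha).trans hab
    · refine le_csInf hAne fun a ha => ?_
      refine le_of_forall_pos_le_add fun ε hε => ?_
      exact csInf_le hbB (hAB a ha ε hε)
  · have hbB : ¬ BddBelow B := by
      rintro ⟨m, hm⟩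
      refine hbA ⟨m - 1, fun a ha => ?_⟩
      have := hm (hAB a ha 1 one_pos)
      linarith
    rw [Real.sInf_of_not_bddBelow hbA, Real.sInf_of_not_bddBelow hbB]
end

section
/- Let K, J be positive integers, ξ¹,…,ξ^K ∈ ℝ^J, Q ∈ ℝ^K, μ ∈ ℝ^J, let S ∈ ℝ^{J×J} be symmetric positive definite, and let γ, η ∈ ℝ. Define P₃ = {p ∈ ℝ^K : p ≥ 0, Σ_k p_k = 1, (Σ_k p_k ξᵏ − μ)ᵀ S⁻¹ (Σ_k p_k ξᵏ − μ) ≤ γ, and η S − Σ_k p_k (ξᵏ − μ)(ξᵏ − μ)ᵀ is positive semidefinite}. Assume the Slater condition: there exists p ∈ ℝ^K with p ≥ 0, Σ_k p_k = 1, (Σ_k p_k ξᵏ − μ)ᵀ S⁻¹ (Σ_k p_k ξᵏ − μ) < γ, and η S − Σ_k p_k (ξᵏ − μ)(ξᵏ − μ)ᵀ positive definite. Then sup_{p ∈ P₃} Σ_{k=1}^K p_k Q_k equals the infimum of s + S • z₁ − 2 μᵀ z₂ + γ z₃ + η (S • Y) over all s ∈ ℝ, z₁ ∈ ℝ^{J×J},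 z₂ ∈ ℝ^J, z₃ ∈ ℝ, Y ∈ ℝ^{J×J} such that the block matrix Z = [[z₁, z₂],[z₂ᵀ, z₃]] ∈ ℝ^{(J+1)×(J+1)} is positive semidefinite, Y is positive semidefinite, and s − 2 z₂ᵀ ξᵏ + ((ξᵏ − μ)(ξᵏ − μ)ᵀ) • Y ≥ Q_k for every k. -/
open scoped BigOperators
open Matrix

open scoped MatrixOrder in
theorem aux_factor {n : Type*} [Fintype n] [DecidableEq n] {A : Matrix n n ℝ}
    (hA : A.PosSemidef) : ∃ B : Matrix n n ℝ, A = Bᵀ * B := by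
  obtain ⟨B, hB⟩ := CStarAlgebra.nonneg_iff_eq_star_mul_self.mp hA.nonneg
  exact ⟨B, by simpa [Matrix.star_eq_conjTranspose] using hB⟩

theorem aux_frob_trace {n : Type*} [Fintype n] (A B : Matrix n n ℝ) :
    frob A B = (Aᵀ * B).trace := by
  simp only [frob, Matrix.trace, Matrix.diag, Matrix.mul_apply, Matrix.transpose_apply]
  rw [Finset.sum_comm]

theorem aux_frob_nonneg {n : Type*} [Fintype n] [DecidableEq n] {A B : Matrix n n ℝ}
    (hA : A.PosSemidef) (hB : B.PosSemidef) : 0 ≤ frob A B := by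
  obtain ⟨C, rfl⟩ := aux_factor hA
  rw [aux_frob_trace, Matrix.transpose_mul, Matrix.transpose_transpose, Matrix.mul_assoc,
    Matrix.trace_mul_comm]
  have := (hB.mul_mul_conjTranspose_same C).trace_nonneg
  simpa using this

theorem aux_lower' {n : Type*} [Fintype n] (M : Matrix n n ℝ) :
    ∃ C : ℝ, 0 ≤ C ∧ ∀ y : n → ℝ, -(C * (y ⬝ᵥ y)) ≤ y ⬝ᵥ (M *ᵥ y) := by
  refine ⟨∑ i, ∑ j, |M i j|, by positivity, fun y => ?_⟩
  have hy : ∀ i, y i ^ 2 ≤ y ⬝ᵥ y := by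
    intro i
    have := Finset.single_le_sum (f := fun i => y i * y i)
      (fun i _ => mul_self_nonneg (y i)) (Finset.mem_univ i)
    rw [sq]; exact this
  generalize y ⬝ᵥ y = N at *
  simp only [dotProduct, Matrix.mulVec, Finset.mul_sum, Finset.sum_mul, ← Finset.sum_neg_distrib]
  refine Finset.sum_le_sum fun i _ => Finset.sum_le_sum fun j _ => ?_
  have h1 : |y i * y j| ≤ N := by
    rw [abs_le]; constructor <;> nlinarith [hy i, hy j, sq_nonneg (y i + y j), sq_nonneg (y i - y j)]
  have h2 : |M i j * (y i * y j)| ≤ |M i j| * N := by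
    rw [abs_mul]; exact mul_le_mul_of_nonneg_left h1 (abs_nonneg _)
  have := (abs_le.mp h2).1
  linarith [this, show y i * (M i j * y j) = M i j * (y i * y j) by ring]

theorem aux_dominate {n : Type*} [Fintype n] [DecidableEq n] {A : Matrix n n ℝ}
    (hA : A.PosDef) (M : Matrix n n ℝ) :
    ∃ T : ℝ, 0 ≤ T ∧ ∀ T' ≥ T, ∀ x : n → ℝ, 0 ≤ x ⬝ᵥ ((M + T' • A) *ᵥ x) := by
  obtain ⟨B, hB⟩ := aux_factor hA.posSemidef
  have hBu : IsUnit B := by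
    have := hA.isUnit
    rw [hB, Matrix.isUnit_iff_isUnit_det, Matrix.det_mul] at this
    rw [Matrix.isUnit_iff_isUnit_det]
    exact isUnit_of_mul_isUnit_right this
  obtain ⟨C, hC, h⟩ := aux_lower' ((B⁻¹)ᵀ * M * B⁻¹)
  refine ⟨C, hC, fun T' hT' x => ?_⟩
  have h1 := h (B *ᵥ x)
  have e0 : B⁻¹ * B = 1 := Matrix.nonsing_inv_mul _ ((Matrix.isUnit_iff_isUnit_det _).mp hBu)
  have e1 : (B *ᵥ x) ⬝ᵥ (((B⁻¹)ᵀ * M * B⁻¹) *ᵥ (B *ᵥ x)) = x ⬝ᵥ (M *ᵥ x) := by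
    rw [Matrix.mulVec_mulVec, Matrix.mul_assoc, e0, Matrix.mul_one, ← Matrix.mulVec_mulVec,
      Matrix.dotProduct_mulVec, Matrix.vecMul_transpose, Matrix.mulVec_mulVec, e0,
      Matrix.one_mulVec]
  have e2 : (B *ᵥ x) ⬝ᵥ (B *ᵥ x) = x ⬝ᵥ (A *ᵥ x) := by
    rw [hB, ← Matrix.mulVec_mulVec, Matrix.dotProduct_mulVec x, Matrix.vecMul_transpose]
  have h2 : 0 ≤ x ⬝ᵥ (A *ᵥ x) := by simpa using hA.posSemidef.dotProduct_mulVec_nonneg x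
  rw [e1, e2] at h1
  rw [Matrix.add_mulVec, Matrix.smul_mulVec, dotProduct_add, dotProduct_smul, smul_eq_mul]
  nlinarith [mul_le_mul_of_nonneg_right hT' h2]

theorem aux_repr {n : Type*} [Fintype n] [DecidableEq n] (φ : Matrix n n ℝ →ₗ[ℝ] ℝ)
    (h : ∀ M : Matrix n n ℝ, (∀ x, 0 ≤ x ⬝ᵥ (M *ᵥ x)) → 0 ≤ φ M) :
    ∃ Z : Matrix n n ℝ, Z.PosSemidef ∧ ∀ M, φ M = frob M Z := by
  have hr : ∀ M, φ M = frob M (Matrix.of fun i j => φ (Matrix.single i j 1)) := by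
    intro M
    conv_lhs => rw [Matrix.matrix_eq_sum_single M]
    simp only [map_sum, frob, Matrix.of_apply]
    refine Finset.sum_congr rfl fun i _ => Finset.sum_congr rfl fun j _ => ?_
    rw [← smul_eq_mul, ← map_smul, Matrix.smul_single, smul_eq_mul, mul_one]
  have hsym : ∀ i j, φ (Matrix.single i j 1) ≤ φ (Matrix.single j i 1) := by
    intro i j
    rw [← sub_nonneg, ← map_sub]
    apply h
    intro x
    rw [Matrix.sub_mulVec, dotProduct_sub]
    have key : ∀ a b : n, x ⬝ᵥ (Matrix.single a b (1 : ℝ) *ᵥ x) = x a * x b := by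
      intro a b
      rw [Matrix.single_mulVec, one_mul]
      simp only [dotProduct, Function.update_apply, Pi.zero_apply, mul_ite, mul_zero]
      simp
    rw [key, key]
    linarith [mul_comm (x i) (x j)]
  refine ⟨_, ?_, hr⟩
  refine .of_dotProduct_mulVec_nonneg ?_ fun x => ?_
  · ext i j
    simp only [Matrix.conjTranspose_apply, Matrix.of_apply, star_trivial]
    exact le_antisymm (hsym _ _) (hsym _ _)
  · have h1 := h (Matrix.vecMulVec x x) (fun y => by
      rw [Matrix.vecMulVec_mulVec]
      simp [dotProduct_comm y x]
      exact mul_self_nonneg _)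
    rw [hr] at h1
    refine h1.trans_eq ?_
    simp only [frob, dotProduct, Matrix.mulVec, Finset.mul_sum, Matrix.vecMulVec_apply,
      Matrix.of_apply, Pi.star_apply, star_trivial]
    exact Finset.sum_congr rfl fun i _ => Finset.sum_congr rfl fun j _ => by ring

/-- The cone used for the Riesz extension. -/
def auxCone {ι m n : Type*} [Fintype ι] [Fintype m] [Fintype n]
    (q : ι → ℝ) (G : ι → Matrix m m ℝ) (H : ι → Matrix n n ℝ) :
    PointedCone ℝ (ℝ × Matrix m m ℝ × Matrix n n ℝ) where
  carrier := {w | ∃ p : ι → ℝ, (∀ k, 0 ≤ p k) ∧ 0 ≤ w.1 + ∑ k, p k * q k ∧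
    (∀ x, 0 ≤ x ⬝ᵥ ((w.2.1 + ∑ k, p k • G k) *ᵥ x)) ∧
    (∀ x, 0 ≤ x ⬝ᵥ ((w.2.2 + ∑ k, p k • H k) *ᵥ x))}
  zero_mem' := ⟨0, by simp⟩
  add_mem' := by
    rintro a b ⟨p, hp, h1, h2, h3⟩ ⟨p', hp', h1', h2', h3'⟩
    refine ⟨p + p', fun k => add_nonneg (hp k) (hp' k), ?_, fun x => ?_, fun x => ?_⟩
    · have := add_nonneg h1 h1'
      simp only [Pi.add_apply, add_mul, Finset.sum_add_distrib, Prod.fst_add]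
      linarith
    · have := add_nonneg (h2 x) (h2' x)
      rw [← dotProduct_add, ← Matrix.add_mulVec] at this
      have e : (a + b).2.1 + ∑ k, (p + p') k • G k
          = (a.2.1 + ∑ k, p k • G k) + (b.2.1 + ∑ k, p' k • G k) := by
        simp only [Pi.add_apply, add_smul, Finset.sum_add_distrib, Prod.snd_add, Prod.fst_add]
        abel
      rw [e]
      exact this
    · have := add_nonneg (h3 x) (h3' x)
      rw [← dotProduct_add, ← Matrix.add_mulVec] at this
      have e : (a + b).2.2 + ∑ k, (p + p') k • H k
          = (a.2.2 + ∑ k, p k • H k) + (b.2.2 + ∑ k, p' k • H k) := by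
        simp only [Pi.add_apply, add_smul, Finset.sum_add_distrib, Prod.snd_add]
        abel
      rw [e]
      exact this
  smul_mem' := by
    rintro ⟨c, hc⟩ a ⟨p, hp, h1, h2, h3⟩
    refine ⟨c • p, fun k => mul_nonneg hc (hp k), ?_, fun x => ?_, fun x => ?_⟩
    · have := mul_nonneg hc h1
      have e : c * a.1 + ∑ k, (c • p) k * q k = c * (a.1 + ∑ k, p k * q k) := by
        simp only [mul_add, Finset.mul_sum, mul_assoc, Pi.smul_apply, smul_eq_mul]
      change 0 ≤ c * a.1 + ∑ k, (c • p) k * q k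
      rw [e]
      exact this
    · have := mul_nonneg hc (h2 x)
      rw [← smul_eq_mul, ← dotProduct_smul, ← Matrix.smul_mulVec] at this
      have e : c • a.2.1 + ∑ k, (c • p) k • G k = c • (a.2.1 + ∑ k, p k • G k) := by
        simp only [smul_add, Finset.smul_sum, mul_smul, Pi.smul_apply, smul_eq_mul]
      change 0 ≤ x ⬝ᵥ ((c • a.2.1 + ∑ k, (c • p) k • G k) *ᵥ x)
      rw [e]
      exact this
    · have := mul_nonneg hc (h3 x)
      rw [← smul_eq_mul, ← dotProduct_smul, ← Matrix.smul_mulVec] at this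
      have e : c • a.2.2 + ∑ k, (c • p) k • H k = c • (a.2.2 + ∑ k, p k • H k) := by
        simp only [smul_add, Finset.smul_sum, mul_smul, Pi.smul_apply, smul_eq_mul]
      change 0 ≤ x ⬝ᵥ ((c • a.2.2 + ∑ k, (c • p) k • H k) *ᵥ x)
      rw [e]
      exact this

theorem aux_mem {ι m n : Type*} [Fintype ι] [Fintype m] [Fintype n]
    (q : ι → ℝ) (G : ι → Matrix m m ℝ) (H : ι → Matrix n n ℝ)
    (w : ℝ × Matrix m m ℝ × Matrix n n ℝ) : w ∈ auxCone q G H ↔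
    ∃ p : ι → ℝ, (∀ k, 0 ≤ p k) ∧ 0 ≤ w.1 + ∑ k, p k * q k ∧
    (∀ x, 0 ≤ x ⬝ᵥ ((w.2.1 + ∑ k, p k • G k) *ᵥ x)) ∧
    (∀ x, 0 ≤ x ⬝ᵥ ((w.2.2 + ∑ k, p k • H k) *ᵥ x)) := Iff.rfl

theorem aux_dual {ι m n : Type*} [Fintype ι] [DecidableEq ι] [Fintype m] [Fintype n]
    [DecidableEq m] [DecidableEq n]
    (q : ι → ℝ) (G : ι → Matrix m m ℝ) (H : ι → Matrix n n ℝ)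
    (hopt : ∀ p : ι → ℝ, (∀ k, 0 ≤ p k) → (∀ x, 0 ≤ x ⬝ᵥ ((∑ k, p k • G k) *ᵥ x)) →
      (∀ x, 0 ≤ x ⬝ᵥ ((∑ k, p k • H k) *ᵥ x)) → ∑ k, p k * q k ≤ 0)
    (hsl : ∃ p : ι → ℝ, (∀ k, 0 ≤ p k) ∧ (∑ k, p k • G k).PosDef ∧ (∑ k, p k • H k).PosDef) :
    ∃ (Z : Matrix m m ℝ) (Y : Matrix n n ℝ), Z.PosSemidef ∧ Y.PosSemidef ∧
      ∀ k, q k + frob (G k) Z + frob (H k) Y ≤ 0 := by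
  let e : ℝ × Matrix m m ℝ × Matrix n n ℝ := (1, 0, 0)
  have he : e ≠ 0 := fun h => by simpa [e] using congrArg Prod.fst h
  let f : (ℝ × Matrix m m ℝ × Matrix n n ℝ) →ₗ.[ℝ] ℝ := LinearPMap.mkSpanSingleton e (1 : ℝ) he
  obtain ⟨g, hg, hpos⟩ := riesz_extension (auxCone q G H) f (by
      rintro ⟨x, hx⟩ hxs
      obtain ⟨c, rfl⟩ := Submodule.mem_span_singleton.mp hx
      obtain ⟨p, hp, h1, h2, h3⟩ := (aux_mem _ _ _ _).mp hxs
      have := hopt p hp (by simpa [e] using h2) (by simpa [e] using h3)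
      have hf : f ⟨c • e, hx⟩ = c := by
        have := LinearPMap.mkSpanSingleton'_apply (σ := RingHom.id ℝ) e (1 : ℝ)
          (fun c hc => by
            have : c = 0 := (smul_eq_zero.mp hc).resolve_right he
            simp [this]) c hx
        exact this.trans (by simp)
      rw [hf]
      simp [e] at h1
      linarith) (by
      rintro ⟨r, M, N⟩
      obtain ⟨p, hp, hG, hH⟩ := hsl
      obtain ⟨T1, hT1, h1⟩ := aux_dominate hG M
      obtain ⟨T2, hT2, h2⟩ := aux_dominate hH N
      refine ⟨⟨(-r - ∑ k, (max T1 T2 * p k) * q k) • e,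
        Submodule.mem_span_singleton.mpr ⟨_, rfl⟩⟩, ?_⟩
      refine (aux_mem _ _ _ _).mpr ⟨fun k => max T1 T2 * p k,
        fun k => mul_nonneg (hT1.trans (le_max_left _ _)) (hp k), ?_, ?_, ?_⟩
      · have : ∀ a b : ℝ, 0 ≤ -a - b + a + b := fun a b => by linarith
        simpa [e] using this _ _
      · have := h1 _ (le_max_left T1 T2)
        simpa [e, mul_smul, Finset.smul_sum] using this
      · have := h2 _ (le_max_right T1 T2)
        simpa [e, mul_smul, Finset.smul_sum] using this)
  have hg1 : g e = 1 := by
    have := hg ⟨e, Submodule.mem_span_singleton_self e⟩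
    rw [this]
    exact LinearPMap.mkSpanSingleton_apply ℝ ℝ he _
  obtain ⟨Z, hZ, hZr⟩ := aux_repr
    (g ∘ₗ LinearMap.inr ℝ ℝ _ ∘ₗ LinearMap.inl ℝ (Matrix m m ℝ) (Matrix n n ℝ))
    (fun M hM => hpos _ ((aux_mem _ _ _ _).mpr ⟨0, by simp, by simp, by simpa using hM, by simp⟩))
  obtain ⟨Y, hY, hYr⟩ := aux_repr
    (g ∘ₗ LinearMap.inr ℝ ℝ _ ∘ₗ LinearMap.inr ℝ (Matrix m m ℝ) (Matrix n n ℝ))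
    (fun M hM => hpos _ ((aux_mem _ _ _ _).mpr ⟨0, by simp, by simp, by simp, by simpa using hM⟩))
  refine ⟨Z, Y, hZ, hY, fun k => ?_⟩
  have h0 := hpos (-(q k), -(G k), -(H k)) ((aux_mem _ _ _ _).mpr
    ⟨Pi.single k 1, fun j => by
      by_cases h : j = k
      · subst h; simp
      · simp [h], by simp [Pi.single_apply], by simp [Pi.single_apply], by simp [Pi.single_apply]⟩)
  have e1 : ((-(q k), -(G k), -(H k)) : ℝ × Matrix m m ℝ × Matrix n n ℝ) =
      -(q k • e + (0, G k, 0) + (0, 0, H k)) := by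
    simp [e]
  rw [e1, map_neg, map_add, map_add, map_smul, hg1] at h0
  have a1 : g (0, G k, 0) = frob (G k) Z := by rw [← hZr]; rfl
  have a2 : g (0, 0, H k) = frob (H k) Y := by rw [← hYr]; rfl
  rw [a1, a2] at h0
  simp at h0
  linarith

theorem aux_block_det {J : ℕ} (S : Matrix (Fin J) (Fin J) ℝ) (d : Fin J → ℝ) (γ : ℝ) :
    ((Matrix.of fun _ _ => γ : Matrix Unit Unit ℝ) -
      (Matrix.of fun i (_ : Unit) => d i)ᴴ * S⁻¹ * (Matrix.of fun i (_ : Unit) => d i)) =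
    Matrix.of fun _ _ => γ - d ⬝ᵥ (S⁻¹ *ᵥ d) := by
  ext a b
  rw [Matrix.mul_assoc]
  simp [Matrix.mul_apply, dotProduct, Matrix.mulVec]

theorem aux_block_eq {J : ℕ} (S : Matrix (Fin J) (Fin J) ℝ) (d : Fin J → ℝ) (γ : ℝ) :
    blockMat S d γ = Matrix.fromBlocks S (Matrix.of fun i (_ : Unit) => d i)
      (Matrix.of fun i (_ : Unit) => d i)ᴴ (Matrix.of fun _ _ => γ) := by
  ext (a | a) (b | b) <;> simp [blockMat]

theorem aux_block_psd {J : ℕ} {S : Matrix (Fin J) (Fin J) ℝ} (hS : S.PosDef)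
    (d : Fin J → ℝ) (γ : ℝ) :
    (blockMat S d γ).PosSemidef ↔ d ⬝ᵥ (S⁻¹ *ᵥ d) ≤ γ := by
  let _ := hS.isUnit.invertible
  rw [aux_block_eq, Matrix.PosDef.fromBlocks₁₁ _ _ hS, aux_block_det]
  constructor
  · intro h
    have := h.dotProduct_mulVec_nonneg (fun _ => 1)
    simp [dotProduct, Matrix.mulVec] at this
    simpa [dotProduct, Matrix.mulVec] using this
  · intro h
    refine .of_dotProduct_mulVec_nonneg ?_ fun x => ?_
    · ext a b; simp
    · have : star x ⬝ᵥ ((Matrix.of fun _ _ => γ - d ⬝ᵥ (S⁻¹ *ᵥ d)) *ᵥ x) =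
          (γ - d ⬝ᵥ (S⁻¹ *ᵥ d)) * (x () * x ()) := by
        rw [dotProduct]
        simp only [Matrix.mulVec]
        rw [dotProduct]
        simp
        ring
      rw [this]
      exact mul_nonneg (by linarith) (mul_self_nonneg _)

theorem aux_block_pd {J : ℕ} {S : Matrix (Fin J) (Fin J) ℝ} (hS : S.PosDef)
    (d : Fin J → ℝ) (γ : ℝ) (h : d ⬝ᵥ (S⁻¹ *ᵥ d) < γ) : (blockMat S d γ).PosDef := by
  rw [((aux_block_psd hS d γ).mpr h.le).posDef_iff_det_ne_zero]
  let _ := hS.isUnit.invertible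
  rw [aux_block_eq, Matrix.det_fromBlocks₁₁, Matrix.invOf_eq_nonsing_inv, aux_block_det]
  refine mul_ne_zero hS.det_pos.ne' ?_
  rw [Matrix.det_unique, Matrix.of_apply]
  linarith

theorem aux_block_frob {J : ℕ} (S z₁ : Matrix (Fin J) (Fin J) ℝ) (d z₂ : Fin J → ℝ) (γ z₃ : ℝ) :
    frob (blockMat S d γ) (blockMat z₁ z₂ z₃) =
      frob S z₁ + 2 * (∑ j, d j * z₂ j) + γ * z₃ := by
  simp [frob, blockMat, Fintype.sum_sum_type, Finset.sum_add_distrib]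
  ring

theorem aux_block_exists {J : ℕ} (Z : Matrix (Fin J ⊕ Unit) (Fin J ⊕ Unit) ℝ)
    (hZ : Z.IsHermitian) : ∃ z₁ z₂ z₃, Z = blockMat z₁ z₂ z₃ := by
  refine ⟨Matrix.of fun i j => Z (.inl i) (.inl j), fun i => Z (.inl i) (.inr ()),
    Z (.inr ()) (.inr ()), ?_⟩
  ext (a | a) (b | b) <;> simp [blockMat]
  simpa using (hZ.apply (Sum.inr ()) (Sum.inl b)).symm

theorem aux_frob_sub {n : Type*} [Fintype n] (A B Y : Matrix n n ℝ) (c : ℝ) :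
    frob (c • A - B) Y = c * frob A Y - frob B Y := by
  simp [frob, Finset.mul_sum, sub_mul, mul_assoc]

theorem aux_frob_sum {n ι : Type*} [Fintype n] [Fintype ι] (p : ι → ℝ) (A : ι → Matrix n n ℝ)
    (Y : Matrix n n ℝ) : frob (∑ k, p k • A k) Y = ∑ k, p k * frob (A k) Y := by
  simp only [aux_frob_trace, Matrix.transpose_sum, Matrix.transpose_smul, Finset.sum_mul,
    Matrix.trace_sum, Matrix.smul_mul, Matrix.trace_smul, smul_eq_mul]

theorem aux_sum_block {J K : ℕ} (ξ : Fin K → Fin J → ℝ) (μ : Fin J → ℝ)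
    (S : Matrix (Fin J) (Fin J) ℝ) (γ : ℝ) (p : Fin K → ℝ) (hp : ∑ k, p k = 1) :
    ∑ k, p k • blockMat S (fun j => ξ k j - μ j) γ =
      blockMat S (fun j => (∑ k, p k * ξ k j) - μ j) γ := by
  have h1 : ∀ c : ℝ, ∑ k, p k * c = c := fun c => by rw [← Finset.sum_mul, hp, one_mul]
  ext (a | a) (b | b) <;>
    simp [blockMat, Matrix.sum_apply, mul_sub, Finset.sum_sub_distrib, h1]

theorem aux_sum_diff {n : Type*} {K : ℕ} (S : Matrix n n ℝ) (η : ℝ)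
    (D : Fin K → Matrix n n ℝ) (p : Fin K → ℝ) (hp : ∑ k, p k = 1) :
    ∑ k, p k • (η • S - D k) = η • S - ∑ k, p k • D k := by
  simp only [smul_sub, Finset.sum_sub_distrib]
  rw [← Finset.sum_smul, hp, one_smul]

theorem aux_psd_of_sum {n : Type*} [Fintype n] {A : Matrix n n ℝ} (hA : A.IsHermitian)
    (h : ∀ x, 0 ≤ x ⬝ᵥ (A *ᵥ x)) : A.PosSemidef :=
  .of_dotProduct_mulVec_nonneg hA fun x => by simpa using h x

/-- Lagrangian strong duality for the Type-3 ambiguity set under Slater's condition: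
the worst-case expectation equals the optimal value of the dual semidefinite program. -/
theorem stmt5 (K J : ℕ) (hK : 0 < K) (hJ : 0 < J)
    (ξ : Fin K → Fin J → ℝ) (Q : Fin K → ℝ) (μ : Fin J → ℝ)
    (S : Matrix (Fin J) (Fin J) ℝ) (hS : S.PosDef) (γ η : ℝ)
    (hslater : ∃ p : Fin K → ℝ, (∀ k, 0 ≤ p k) ∧ (∑ k, p k) = 1 ∧
      (fun j => (∑ k, p k * ξ k j) - μ j) ⬝ᵥ (S⁻¹ *ᵥ fun j => (∑ k, p k * ξ k j) - μ j) < γ ∧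
      (η • S -
        ∑ k, p k • Matrix.vecMulVec (fun j => ξ k j - μ j) (fun j => ξ k j - μ j)).PosDef) :
    sSup {r : ℝ | ∃ p ∈ Type3Set K J ξ μ S γ η, r = ∑ k, p k * Q k} =
    sInf {v : ℝ | ∃ s z₃ : ℝ, ∃ z₁ Y : Matrix (Fin J) (Fin J) ℝ, ∃ z₂ : Fin J → ℝ,
      (blockMat z₁ z₂ z₃).PosSemidef ∧ Y.PosSemidef ∧
      (∀ k, Q k ≤ s - 2 * (∑ j, z₂ j * ξ k j) +
        frob (Matrix.vecMulVec (fun j => ξ k j - μ j) (fun j => ξ k j - μ j)) Y) ∧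
      v = s + frob S z₁ - 2 * (∑ j, μ j * z₂ j) + γ * z₃ + η * frob S Y} := by
  set D : Fin K → Matrix (Fin J) (Fin J) ℝ := fun k =>
    Matrix.vecMulVec (fun j => ξ k j - μ j) (fun j => ξ k j - μ j) with hD
  set A : Set ℝ := {r : ℝ | ∃ p ∈ Type3Set K J ξ μ S γ η, r = ∑ k, p k * Q k} with hA
  have weak : ∀ p ∈ Type3Set K J ξ μ S γ η, ∀ (s z₃ : ℝ) (z₁ Y : Matrix (Fin J) (Fin J) ℝ)
      (z₂ : Fin J → ℝ), (blockMat z₁ z₂ z₃).PosSemidef → Y.PosSemidef →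
      (∀ k, Q k ≤ s - 2 * (∑ j, z₂ j * ξ k j) + frob (D k) Y) →
      ∑ k, p k * Q k ≤ s + frob S z₁ - 2 * (∑ j, μ j * z₂ j) + γ * z₃ + η * frob S Y := by
    rintro p ⟨hp, hp1, hpm, hpc⟩ s z₃ z₁ Y z₂ hZ hY hc
    have a1 := aux_frob_nonneg ((aux_block_psd hS _ _).mpr hpm) hZ
    rw [aux_block_frob] at a1
    have a2 := aux_frob_nonneg hpc hY
    rw [aux_frob_sub, aux_frob_sum] at a2
    have a3 : ∑ k, p k * Q k ≤ ∑ k, p k * (s - 2 * (∑ j, z₂ j * ξ k j) + frob (D k) Y) :=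
      Finset.sum_le_sum fun k _ => mul_le_mul_of_nonneg_left (hc k) (hp k)
    have a4 : ∑ k, p k * (s - 2 * (∑ j, z₂ j * ξ k j) + frob (D k) Y) =
        s - 2 * (∑ k, p k * ∑ j, z₂ j * ξ k j) + ∑ k, p k * frob (D k) Y := by
      simp only [mul_add, mul_sub, Finset.sum_add_distrib, Finset.sum_sub_distrib]
      rw [← Finset.sum_mul, hp1, one_mul, Finset.mul_sum]
      congr 2
      exact Finset.sum_congr rfl fun k _ => by ring
    have a5 : ∑ j, ((∑ k, p k * ξ k j) - μ j) * z₂ j =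
        (∑ k, p k * ∑ j, z₂ j * ξ k j) - ∑ j, μ j * z₂ j := by
      simp only [sub_mul, Finset.sum_sub_distrib, Finset.sum_mul, Finset.mul_sum]
      congr 1
      rw [Finset.sum_comm]
      exact Finset.sum_congr rfl fun k _ => Finset.sum_congr rfl fun j _ => by ring
    rw [a5] at a1
    linarith
  obtain ⟨p₀, hp₀, hp₀1, hp₀m, hp₀c⟩ := hslater
  have hmem₀ : p₀ ∈ Type3Set K J ξ μ S γ η := ⟨hp₀, hp₀1, hp₀m.le, hp₀c.posSemidef⟩
  have hne : A.Nonempty := ⟨_, p₀, hmem₀, rfl⟩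
  have hbdd : BddAbove A := by
    refine ⟨∑ k, |Q k|, ?_⟩
    rintro r ⟨p, ⟨hp, hp1, -, -⟩, rfl⟩
    refine Finset.sum_le_sum fun k _ => ?_
    have h1 : p k ≤ 1 := hp1 ▸ Finset.single_le_sum (fun i _ => hp i) (Finset.mem_univ k)
    calc p k * Q k ≤ p k * |Q k| := mul_le_mul_of_nonneg_left (le_abs_self _) (hp k)
      _ ≤ 1 * |Q k| := mul_le_mul_of_nonneg_right h1 (abs_nonneg _)
      _ = |Q k| := one_mul _
  set v := sSup A with hv
  have hDh : ∀ k, (D k).IsHermitian := by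
    intro k
    ext i j
    simp [hD, Matrix.vecMulVec_apply, mul_comm]
  have hmix : ∀ p : Fin K → ℝ, (η • S - ∑ k, p k • D k).IsHermitian := by
    intro p
    ext i j
    have h1 : ∀ k, D k j i = D k i j := fun k => by simpa using (hDh k).apply i j
    have h2 : S j i = S i j := by simpa using hS.1.apply i j
    simp [Matrix.sum_apply, h1, h2]
  have hblk : ∀ d : Fin J → ℝ, (blockMat S d γ).IsHermitian := by
    intro d
    have h2 : ∀ i j, S j i = S i j := fun i j => by simpa using hS.1.apply i j
    ext (a | a) (b | b)
    · simpa [blockMat] using h2 a b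
    all_goals simp [blockMat]
  obtain ⟨Z, Y, hZ, hY, hZY⟩ := aux_dual (fun k => Q k - v)
    (fun k => blockMat S (fun j => ξ k j - μ j) γ) (fun k => η • S - D k) (by
      intro p hp h1 h2
      have ht0 : 0 ≤ ∑ k, p k := Finset.sum_nonneg fun k _ => hp k
      rcases ht0.eq_or_lt with ht | ht
      · have : ∀ k, p k = 0 := fun k =>
          (Finset.sum_eq_zero_iff_of_nonneg (fun k _ => hp k)).mp ht.symm k (Finset.mem_univ k)
        simp [this]
      · set t := ∑ k, p k with htd
        have hs1 : ∑ k, t⁻¹ * p k = 1 := by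
          rw [← Finset.mul_sum, ← htd, inv_mul_cancel₀ ht.ne']
        have hti : 0 ≤ t⁻¹ := (inv_pos.mpr ht).le
        have b1 : ∀ x, 0 ≤ x ⬝ᵥ ((∑ k, (t⁻¹ * p k) • blockMat S (fun j => ξ k j - μ j) γ) *ᵥ x) := by
          intro x
          have := mul_nonneg hti (h1 x)
          simp only [mul_smul]
          rw [← Finset.smul_sum, Matrix.smul_mulVec, dotProduct_smul]
          exact this
        have b2 : ∀ x, 0 ≤ x ⬝ᵥ ((∑ k, (t⁻¹ * p k) • (η • S - D k)) *ᵥ x) := by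
          intro x
          have := mul_nonneg hti (h2 x)
          simp only [mul_smul _ (p _)]
          rw [← Finset.smul_sum, Matrix.smul_mulVec, dotProduct_smul]
          exact this
        rw [aux_sum_block ξ μ S γ _ hs1] at b1
        rw [aux_sum_diff S η D _ hs1] at b2
        have hmem : (fun k => t⁻¹ * p k) ∈ Type3Set K J ξ μ S γ η :=
          ⟨fun k => mul_nonneg hti (hp k), hs1,
            (aux_block_psd hS _ _).mp (aux_psd_of_sum (hblk _) b1), aux_psd_of_sum (hmix _) b2⟩
        have hle : ∑ k, (t⁻¹ * p k) * Q k ≤ v := le_csSup hbdd ⟨_, hmem, rfl⟩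
        have e1 : ∑ k, (t⁻¹ * p k) * Q k = t⁻¹ * ∑ k, p k * Q k := by
          rw [Finset.mul_sum]
          exact Finset.sum_congr rfl fun k _ => by ring
        rw [e1, inv_mul_le_iff₀ ht] at hle
        simp only [mul_sub, Finset.sum_sub_distrib]
        rw [← Finset.sum_mul, ← htd]
        linarith) ⟨p₀, hp₀, by
          rw [aux_sum_block ξ μ S γ _ hp₀1]
          exact aux_block_pd hS _ _ hp₀m, by
          rw [aux_sum_diff S η D _ hp₀1]
          exact hp₀c⟩
  obtain ⟨z₁, z₂, z₃, rfl⟩ := aux_block_exists Z hZ.1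
  symm
  apply IsLeast.csInf_eq
  constructor
  · refine ⟨v - frob S z₁ + 2 * (∑ j, μ j * z₂ j) - γ * z₃ - η * frob S Y, z₃, z₁, Y, z₂, hZ, hY,
      fun k => ?_, by ring⟩
    have h := hZY k
    rw [aux_block_frob, aux_frob_sub] at h
    have e : ∑ j, (ξ k j - μ j) * z₂ j = (∑ j, z₂ j * ξ k j) - ∑ j, μ j * z₂ j := by
      rw [← Finset.sum_sub_distrib]
      exact Finset.sum_congr rfl fun j _ => by ring
    rw [e] at h
    change Q k ≤ _ + frob (D k) Y
    linarith
  · rintro w ⟨s, z₃', z₁', Y', z₂', hZ', hY', hc, rfl⟩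
    apply csSup_le hne
    rintro r ⟨p, hp, rfl⟩
    exact weak p hp s z₃' z₁' Y' z₂' hZ' hY' hc
end
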